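/- Let F be a totally real number field of degree n over ℚ with real embeddings σ_1, …, σ_n : F → ℝ. Then for every real η > 0, the function ε ↦ ∏_{i=1}^{n} max(1, |σ_i(ε)|)^{-η} is summable over the unit group 𝓞_F^× of the ring of integers; equivalently, the sum over all units ε of ∏_{i : |σ_i(ε)| > 1} |σ_i(ε)|^{-η} is finite. -/

import Mathlib

open NumberField

open NumberField.Units NumberField.Units.dirichletUnitTheorem NumberField.InfinitePlace

theorem aux_summable_exp {E : Type*} [NormedAddCommGroup E] [NormedSpace ℝ E]
    [FiniteDimensional ℝ E] (L : Submodule ℤ E) [DiscreteTopology L] (c : ℝ) (hc : 0 < c) :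
    Summable (fun z : L => Real.exp (-c * ‖z‖)) := by
  set k : ℕ := Module.finrank ℤ L + 1 with hk
  have h := ZLattice.summable_norm_rpow L (-(k : ℝ)) (by rw [hk]; push_cast; linarith)
  have h2 := h.mul_left ((k.factorial : ℝ) / c ^ k)
  refine h2.of_norm_bounded_eventually ?_
  have h0 : ∀ᶠ z : L in Filter.cofinite, z ≠ 0 := by
    simp [Filter.eventually_cofinite]
  filter_upwards [h0] with z hz
  have hz' : 0 < ‖z‖ := norm_pos_iff.mpr hz
  rw [Real.norm_of_nonneg (Real.exp_pos _).le, neg_mul, Real.exp_neg, Real.rpow_neg hz'.le,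
    Real.rpow_natCast]
  have h3 := Real.pow_div_factorial_le_exp (c * ‖z‖) (by positivity) k
  have h4 : (k.factorial : ℝ) / c ^ k * (‖z‖ ^ k)⁻¹ = ((c * ‖z‖) ^ k / k.factorial)⁻¹ := by
    rw [mul_pow, inv_div]; field_simp
  rw [h4]
  exact inv_anti₀ (by positivity) h3

theorem aux_fiber (F : Type*) [Field F] [NumberField F] (g : unitLattice F → ℝ)
    (hg : Summable g) (hg0 : ∀ z, 0 ≤ g z)
    (ℓ : (𝓞 F)ˣ → unitLattice F) (hℓ : ∀ x, (ℓ x : logSpace F) = logEmbedding F (Additive.ofMul x)) :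
    Summable (fun x => g (ℓ x)) := by
  classical
  have hs : Function.Surjective ℓ := by
    rintro ⟨z, x, -, hx⟩
    exact ⟨x.toMul, Subtype.ext ((hℓ _).trans hx)⟩
  choose s hs using hs
  have hm : ∀ x, x / s (ℓ x) ∈ torsion F := by
    intro x
    rw [← logEmbedding_eq_zero_iff, ofMul_div, map_sub, ← hℓ, ← hℓ, hs, sub_self]
  let f : (𝓞 F)ˣ → torsion F × unitLattice F := fun x => (⟨x / s (ℓ x), hm x⟩, ℓ x)
  have hf : Function.Injective f := by
    intro x y h
    have h1 : x / s (ℓ x) = y / s (ℓ y) := congrArg (fun p => (p.1 : (𝓞 F)ˣ)) h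
    have h2 : ℓ x = ℓ y := congrArg Prod.snd h
    rw [h2] at h1
    exact div_left_injective h1
  have h1 : Summable (fun _ : torsion F => (1 : ℝ)) := Summable.of_finite
  have h2 := h1.mul_of_nonneg hg (fun _ => zero_le_one) hg0
  have h3 := h2.comp_injective hf
  simpa [Function.comp_def, f] using h3

theorem aux_log_le {n : ℕ} (a : Fin n → ℝ) (ha : ∀ i, 0 < a i) (hp : ∏ i, a i = 1) (j : Fin n) :
    |Real.log (a j)| ≤ Real.log (∏ i, max 1 (a i)) := by
  classical
  have h1 : ∑ i, Real.log (a i) = 0 := by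
    rw [← Real.log_prod (fun i _ => (ha i).ne'), hp, Real.log_one]
  have h2 : Real.log (∏ i, max 1 (a i)) = ∑ i, Real.log (max 1 (a i)) :=
    Real.log_prod (fun i _ => by positivity)
  have hn : ∀ i, 0 ≤ Real.log (max 1 (a i)) := fun i => Real.log_nonneg (le_max_left _ _)
  have hl : ∀ i, Real.log (a i) ≤ Real.log (max 1 (a i)) :=
    fun i => Real.log_le_log (ha i) (le_max_right _ _)
  rw [h2, abs_le]
  rw [← Finset.add_sum_erase _ _ (Finset.mem_univ j)] at h1 ⊢
  have h3 := Finset.sum_le_sum (s := Finset.univ.erase j) (fun i _ => hl i)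
  have h4 := Finset.sum_nonneg (s := Finset.univ.erase j) (fun i _ => hn i)
  constructor <;> linarith [hn j, hl j]

theorem aux_tau
    (F : Type*) [Field F] [NumberField F]
    (n : ℕ) (hn : n = Module.finrank ℚ F)
    (σ : Fin n → (F →+* ℝ)) (hσ : Function.Injective σ) :
    ∃ τ : Fin n → (F →+* ℂ), Function.Bijective τ ∧ ∀ i x, ‖τ i x‖ = |σ i x| := by
  let τ : Fin n → (F →+* ℂ) := fun i => Complex.ofRealHom.comp (σ i)
  have hτi : Function.Injective τ := by
    intro i j h
    apply hσ
    ext x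
    have := congrArg (fun φ : F →+* ℂ => φ x) h
    simpa [τ] using this
  have hτ : Function.Bijective τ := by
    rw [Fintype.bijective_iff_injective_and_card]
    exact ⟨hτi, by rw [Fintype.card_fin, hn, NumberField.Embeddings.card]⟩
  have hτn : ∀ i x, ‖τ i x‖ = |σ i x| := by
    intro i x; simp [τ]
  exact ⟨τ, hτ, hτn⟩

theorem aux_prod
    (F : Type*) [Field F] [NumberField F]
    (n : ℕ) (hn : n = Module.finrank ℚ F)
    (σ : Fin n → (F →+* ℝ)) (hσ : Function.Injective σ) (ε : (𝓞 F)ˣ) :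
    ∏ i, |σ i ((ε : 𝓞 F) : F)| = 1 := by
  obtain ⟨τ, hτ, hτn⟩ := aux_tau F n hn σ hσ
  have h2 := congrArg (‖·‖) (Algebra.norm_eq_prod_embeddings ℚ ℂ ((ε : 𝓞 F) : F))
  have h3 : ∏ i, |σ i ((ε : 𝓞 F) : F)| = ∏ φ : F →+* ℂ, ‖φ ((ε : 𝓞 F) : F)‖ := by
    rw [← hτ.prod_comp (fun φ => ‖φ ((ε : 𝓞 F) : F)‖)]
    simp only [hτn]
  rw [h3]
  have h4 : ∏ φ : F →+* ℂ, ‖φ ((ε : 𝓞 F) : F)‖ =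
      ∏ φ : F →ₐ[ℚ] ℂ, ‖φ ((ε : 𝓞 F) : F)‖ :=
    Fintype.prod_equiv (RingHom.equivRatAlgHom F ℂ) _ _ (fun _ => rfl)
  rw [h4, ← norm_prod]
  refine h2.symm.trans ?_
  have h5 := NumberField.Units.norm F ε
  simp only [eq_ratCast, Complex.norm_ratCast]
  exact_mod_cast h5

open scoped Classical in
theorem aux_norm_le
    (F : Type*) [Field F] [NumberField F]
    (n : ℕ) (hn : n = Module.finrank ℚ F)
    (σ : Fin n → (F →+* ℝ)) (hσ : Function.Injective σ) (ε : (𝓞 F)ˣ) :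
    ‖logEmbedding F (Additive.ofMul ε)‖ ≤
      2 * Real.log (∏ i, max 1 |σ i ((ε : 𝓞 F) : F)|) := by
  obtain ⟨τ, hτ, hτn⟩ := aux_tau F n hn σ hσ
  have hpos : ∀ i, 0 < |σ i ((ε : 𝓞 F) : F)| := by
    intro i
    simp
  have hM0 : 0 ≤ Real.log (∏ i, max 1 |σ i ((ε : 𝓞 F) : F)|) := by
    apply Real.log_nonneg
    exact Finset.one_le_prod (fun i _ => le_max_left _ _)
  rw [pi_norm_le_iff_of_nonneg (by positivity)]
  intro w
  rw [logEmbedding_component, norm_mul]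
  obtain ⟨i, hi⟩ := hτ.2 w.1.embedding
  have hw : w.1 ((ε : 𝓞 F) : F) = |σ i ((ε : 𝓞 F) : F)| := by
    rw [← norm_embedding_eq, ← hi, hτn]
  rw [hw]
  have hb := aux_log_le _ (hpos) (aux_prod F n hn σ hσ ε) i
  have hmu : ‖(w.1.mult : ℝ)‖ ≤ 2 := by
    rw [mult]; split_ifs <;> simp
  exact mul_le_mul hmu hb (norm_nonneg _) (by norm_num)

theorem aux_term {n : ℕ} (a : Fin n → ℝ) (η t : ℝ) (hη : 0 < η)
    (ht : t ≤ 2 * Real.log (∏ i, max 1 (a i))) :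
    ∏ i, (max 1 (a i)) ^ (-η) ≤ Real.exp (-(η / 2) * t) := by
  have hMpos : 0 < ∏ i, max 1 (a i) := Finset.prod_pos (fun i _ => by positivity)
  rw [Real.finsetProd_rpow _ _ (fun i _ => by positivity), Real.rpow_def_of_pos hMpos]
  apply Real.exp_le_exp.mpr
  nlinarith

open scoped Classical in
theorem aux_lattice (F : Type*) [Field F] [NumberField F] (c : ℝ) (hc : 0 < c) :
    Summable (fun z : unitLattice F => Real.exp (-c * ‖(z : logSpace F)‖)) :=
  aux_summable_exp (unitLattice F) c hc

open scoped Classical in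
theorem aux_units (F : Type*) [Field F] [NumberField F] (c : ℝ) (hc : 0 < c) :
    Summable (fun x : (𝓞 F)ˣ => Real.exp (-c * ‖logEmbedding F (Additive.ofMul x)‖)) :=
  aux_fiber F (fun z : unitLattice F => Real.exp (-c * ‖(z : logSpace F)‖))
    (aux_lattice F c hc) (fun _ => (Real.exp_pos _).le)
    (fun x => ⟨logEmbedding F (Additive.ofMul x),
      Submodule.mem_map_of_mem (f := (logEmbedding F).toIntLinearMap) (Submodule.mem_top)⟩)
    (fun _ => rfl)

/-- Let `F` be a totally real number field of degree `n` over `ℚ`, with the `n` distinct real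
embeddings `σ 1, …, σ n : F → ℝ` (an injective family `σ : Fin n → (F →+* ℝ)` with
`n = [F : ℚ]` automatically consists of all the embeddings of `F` into `ℂ`, so `F` is totally
real). Then for every real `η > 0` the function `ε ↦ ∏ i, max (1, |σ i ε|) ^ (-η)` is summable
over the unit group `(𝓞 F)ˣ`; note `max (1, |σ i ε|) ^ (-η) = |σ i ε| ^ (-η)` when
`|σ i ε| > 1` and `= 1` otherwise, so this is the sum `∑_ε ∏_{i : |σ_i(ε)| > 1} |σ_i(ε)|^{-η}`. -/
theorem summable_units_prod_max_rpow
    (F : Type*) [Field F] [NumberField F]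
    (n : ℕ) (hn : n = Module.finrank ℚ F)
    (σ : Fin n → (F →+* ℝ)) (hσ : Function.Injective σ) :
    ∀ η : ℝ, 0 < η →
      Summable (fun ε : (𝓞 F)ˣ =>
        ∏ i : Fin n, (max 1 |σ i ((ε : 𝓞 F) : F)|) ^ (-η)) := by
  intro η hη
  refine Summable.of_nonneg_of_le (fun ε => ?_) (fun ε => ?_) (aux_units F (η / 2) (half_pos hη))
  · exact Finset.prod_nonneg (fun i _ => Real.rpow_nonneg (zero_le_one.trans (le_max_left _ _)) _)
  · exact aux_term _ η _ hη (aux_norm_le F n hn σ hσ ε)
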